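/- Let d ≥ 1 and let α = (α_1,…,α_d) be a multi-index with α_j > −1 for each j. There exists a constant C > 0, depending only on α and d, such that for every t > 0 and every x ∈ (0,∞)^d, the integral of |∂p_t^α(x,y)/∂t| over the region E_t(x) = { y ∈ (0,∞)^d : √(e^{−t} x_j y_j) ≤ 1 − e^{−t} for all j = 1,…,d } satisfies ∫_{E_t(x)} |∂p_t^α(x,y)/∂t| dy ≤ C/t. -/

import Mathlib

open MeasureTheory Real Set

noncomputable def besselI (ν z : ℝ) : ℝ :=
  ∑' m : ℕ, (z / 2) ^ (2 * (m : ℝ) + ν) / (Nat.factorial m * Real.Gamma ((m : ℝ) + ν + 1))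

/-- The positive orthant `(0,∞)^d`. -/
def posOrthant (d : ℕ) : Set (Fin d → ℝ) := Set.univ.pi fun _ => Set.Ioi 0

/-- The Poisson–Laguerre kernel `p_t^α(x,y)`. -/
noncomputable def plKernel (d : ℕ) (α : Fin d → ℝ) (t : ℝ) (x y : Fin d → ℝ) : ℝ :=
  (1 / (2 * Real.sqrt π)) *
    ∫ r in Set.Ioo (0 : ℝ) 1,
      (t * Real.exp (t ^ 2 / (4 * Real.log r)) /
          ((1 - r) ^ d * (-Real.log r) ^ ((3 : ℝ) / 2))) *
        (∏ j, (y j / x j) ^ (α j / 2) *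
            Real.exp (-((r * x j + y j) / (1 - r)) - α j * Real.log r / 2) *
            besselI (α j) (2 * Real.sqrt (r * x j * y j) / (1 - r))) / r

/-- The Poisson–Laguerre semigroup `P_t^α f`, with the convention `P_0^α f = f`. -/
noncomputable def plP (d : ℕ) (α : Fin d → ℝ) (t : ℝ)
    (f : (Fin d → ℝ) → ℝ) (x : Fin d → ℝ) : ℝ :=
  if t = 0 then f x else ∫ y in posOrthant d, plKernel d α t x y * f y

/-!
In the variable `s = -log r` the Poisson–Laguerre kernel is the Laguerre heat kernel at time `s`
averaged against the Lévy density of scale `t`. By the Hille–Hardy formula the heat kernel is, in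
each variable `y j`, a Poisson mixture of gamma densities, hence a probability density in `y`. The
variable `t` occurs only in the Lévy density, and `|1 - 2 v| e⁻ᵛ ≤ 3 e^(-v/4)` at `v = t² / (4 s)`
bounds its `t`-derivative by `6 / t` times the Lévy density of scale `t / 2`. Integrating in `y`
first and then in `s` gives the bound `6 / t` on the whole orthant.
-/

open ProbabilityTheory
open scoped ENNReal Nat

lemma lintegral_fin_nat_prod_eq_prod {n : ℕ} {E : Fin n → Type*}
    {mE : ∀ i, MeasurableSpace (E i)} {μ : ∀ i, Measure (E i)} [∀ i, SigmaFinite (μ i)]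
    {f : ∀ i, E i → ℝ≥0∞} (hf : ∀ i, Measurable (f i)) :
    ∫⁻ y, ∏ i, f i (y i) ∂Measure.pi μ = ∏ i, ∫⁻ s, f i s ∂μ i := by
  induction n with
  | zero => simp
  | succ n ih =>
    have htail : Measurable fun z : ∀ i : Fin n, E i.succ => ∏ i, f i.succ (z i) :=
      Finset.univ.measurable_fun_prod fun i _ => (hf i.succ).comp (measurable_pi_apply i)
    calc ∫⁻ y, ∏ i, f i (y i) ∂Measure.pi μ
        = ∫⁻ z : E 0 × ∀ i : Fin n, E i.succ, f 0 z.1 * ∏ i : Fin n, f i.succ (z.2 i)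
            ∂(μ 0).prod (Measure.pi fun i => μ i.succ) := by
          have hcomp := (measurePreserving_piFinSuccAbove μ 0).symm.lintegral_comp
            (f := fun y => ∏ i, f i (y i)) (by fun_prop)
          exact hcomp.symm.trans (lintegral_congr fun z => Fin.prod_univ_succ _)
      _ = ∏ i, ∫⁻ s, f i s ∂μ i := by
          rw [lintegral_prod_mul (hf 0).aemeasurable htail.aemeasurable, ih fun i => hf i.succ,
            Fin.prod_univ_succ]

lemma lintegral_fintype_prod_eq_prod {ι : Type*} [Fintype ι] {E : ι → Type*}
    {mE : ∀ i, MeasurableSpace (E i)} {μ : ∀ i, Measure (E i)} [∀ i, SigmaFinite (μ i)]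
    {f : ∀ i, E i → ℝ≥0∞} (hf : ∀ i, Measurable (f i)) :
    ∫⁻ y, ∏ i, f i (y i) ∂Measure.pi μ = ∏ i, ∫⁻ s, f i s ∂μ i := by
  let e := (Fintype.equivFin ι).symm
  rw [← (measurePreserving_piCongrLeft μ e).lintegral_comp (by fun_prop)]
  simp_rw [← e.prod_comp, MeasurableEquiv.coe_piCongrLeft, Equiv.piCongrLeft_apply_apply]
  exact lintegral_fin_nat_prod_eq_prod fun i => hf (e i)

lemma lintegral_Ioi_zero_comp_inv (f : ℝ → ℝ≥0∞) :
    ∫⁻ v in Ioi (0 : ℝ), ENNReal.ofReal (v ^ 2)⁻¹ * f v⁻¹ = ∫⁻ s in Ioi 0, f s := by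
  have himage : Inv.inv '' Ioi (0 : ℝ) = Ioi 0 := by
    rw [image_inv_eq_inv]
    ext v
    simp
  conv_rhs => rw [← himage]
  rw [lintegral_image_eq_lintegral_deriv_mul_of_antitoneOn measurableSet_Ioi
    (fun v hv => (hasDerivAt_inv (ne_of_gt hv)).hasDerivWithinAt)
    (fun v hv w _ hvw => inv_anti₀ hv hvw)]
  simp only [neg_neg]

lemma integral_Ioo_zero_one_inv_smul {E : Type*} [NormedAddCommGroup E] [NormedSpace ℝ E]
    (f : ℝ → E) : ∫ r in Ioo (0 : ℝ) 1, r⁻¹ • f r = ∫ s in Ioi 0, f (exp (-s)) := by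
  have himage : (fun s => exp (-s)) '' Ioi 0 = Ioo 0 1 := by
    rw [← image_image exp Neg.neg, image_neg_Ioi, neg_zero, image_exp_Iio, exp_zero]
  rw [← himage, integral_image_eq_integral_deriv_smul_of_antitoneOn measurableSet_Ioi
    (fun s _ => (hasDerivAt_neg s).exp.hasDerivWithinAt)
    (fun s _ u _ hsu => exp_le_exp.2 (neg_le_neg hsu))]
  simp [smul_smul, exp_ne_zero]

section LevyDensity

/-- The density at `s > 0` of the one-sided `1/2`-stable (Lévy) law of scale `t`, which subordinates
the heat semigroup to the Poisson semigroup. -/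
noncomputable def levyDensity (t s : ℝ) : ℝ :=
  t * exp (-(t ^ 2 / (4 * s))) / (2 * √π * s ^ (3 / 2 : ℝ))

/-- The partial derivative `∂/∂t` of `levyDensity t s`. -/
noncomputable def levyDensityDeriv (t s : ℝ) : ℝ :=
  (1 - t ^ 2 / (2 * s)) * exp (-(t ^ 2 / (4 * s))) / (2 * √π * s ^ (3 / 2 : ℝ))

lemma measurable_levyDensity (t : ℝ) : Measurable (levyDensity t) := by
  unfold levyDensity
  fun_prop

lemma measurable_levyDensityDeriv (t : ℝ) : Measurable (levyDensityDeriv t) := by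
  unfold levyDensityDeriv
  fun_prop

variable {t u s : ℝ}

lemma levyDensity_nonneg (ht : 0 ≤ t) (hs : 0 ≤ s) : 0 ≤ levyDensity t s := by
  unfold levyDensity
  positivity

lemma hasDerivAt_levyDensity (t s : ℝ) :
    HasDerivAt (fun u => levyDensity u s) (levyDensityDeriv t s) t := by
  have h := ((hasDerivAt_id t).mul ((hasDerivAt_pow 2 t).div_const (4 * s)).fun_neg.exp).div_const
    (2 * √π * s ^ (3 / 2 : ℝ))
  refine h.congr_deriv ?_
  simp only [levyDensityDeriv, id, Nat.cast_ofNat]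
  ring

lemma levyDensity_le_div_mul (ht : 0 < t) (htu : t ≤ u) (hs : 0 < s) :
    levyDensity u s ≤ u / t * levyDensity t s := by
  have hu : 0 < u := ht.trans_le htu
  calc levyDensity u s = u * exp (-(u ^ 2 / (4 * s))) / (2 * √π * s ^ (3 / 2 : ℝ)) := rfl
    _ ≤ u * exp (-(t ^ 2 / (4 * s))) / (2 * √π * s ^ (3 / 2 : ℝ)) := by gcongr
    _ = u / t * levyDensity t s := by
      rw [levyDensity]
      field_simp

lemma abs_one_sub_two_mul_mul_exp_neg_le {v : ℝ} (hv : 0 ≤ v) :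
    |1 - 2 * v| * exp (-v) ≤ 3 * exp (-(v / 4)) := by
  have habs : |1 - 2 * v| ≤ 3 * exp (3 * v / 4) :=
    abs_le.2 ⟨by linarith [add_one_le_exp (3 * v / 4)], by linarith [add_one_le_exp (3 * v / 4)]⟩
  calc |1 - 2 * v| * exp (-v) ≤ 3 * exp (3 * v / 4) * exp (-v) := by gcongr
    _ = 3 * exp (-(v / 4)) := by
      rw [mul_assoc, ← exp_add]
      ring_nf

lemma abs_levyDensityDeriv_le (ht : 0 < t) (htu : t ≤ u) (hs : 0 < s) :
    |levyDensityDeriv u s| ≤ 6 / t * levyDensity (t / 2) s := by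
  have hscale : u ^ 2 / (2 * s) = 2 * (u ^ 2 / (4 * s)) := by ring
  calc |levyDensityDeriv u s|
      = |1 - 2 * (u ^ 2 / (4 * s))| * exp (-(u ^ 2 / (4 * s))) / (2 * √π * s ^ (3 / 2 : ℝ)) := by
        rw [levyDensityDeriv, hscale, abs_div, abs_mul, abs_exp,
          abs_of_pos (show 0 < 2 * √π * s ^ (3 / 2 : ℝ) by positivity)]
    _ ≤ 3 * exp (-(u ^ 2 / (4 * s) / 4)) / (2 * √π * s ^ (3 / 2 : ℝ)) := by
        gcongr ?_ / _
        exact abs_one_sub_two_mul_mul_exp_neg_le (by positivity)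
    _ ≤ 3 * exp (-(t ^ 2 / (4 * s) / 4)) / (2 * √π * s ^ (3 / 2 : ℝ)) := by gcongr
    _ = 6 / t * levyDensity (t / 2) s := by
        rw [levyDensity, show (t / 2) ^ 2 / (4 * s) = t ^ 2 / (4 * s) / 4 by ring]
        field_simp
        norm_num

-- If `S` has the Lévy law of scale `t`, then `1 / S` is gamma distributed.
lemma inv_sq_mul_levyDensity_inv {v : ℝ} (ht : 0 ≤ t) (hv : 0 < v) :
    (v ^ 2)⁻¹ * levyDensity t v⁻¹ = gammaPDFReal (1 / 2) (t ^ 2 / 4) v := by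
  have hrate : (t ^ 2 / 4) ^ (1 / 2 : ℝ) = t / 2 := by
    rw [← sqrt_eq_rpow, show t ^ 2 / 4 = (t / 2) ^ 2 by ring, sqrt_sq (by positivity)]
  have hpow : (v ^ 2)⁻¹ * v ^ (3 / 2 : ℝ) = v ^ (1 / 2 - 1 : ℝ) := by
    rw [← rpow_natCast, ← rpow_neg hv.le, ← rpow_add hv]
    norm_num
  rw [levyDensity, gammaPDFReal, if_pos hv.le, Gamma_one_half_eq, hrate, ← hpow, inv_rpow hv.le,
    show t ^ 2 / (4 * v⁻¹) = t ^ 2 / 4 * v by field_simp]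
  field_simp

lemma lintegral_levyDensity_le_one (ht : 0 < t) :
    ∫⁻ s in Ioi 0, ENNReal.ofReal (levyDensity t s) ≤ 1 := by
  calc ∫⁻ s in Ioi 0, ENNReal.ofReal (levyDensity t s)
      = ∫⁻ v in Ioi (0 : ℝ), ENNReal.ofReal (v ^ 2)⁻¹ * ENNReal.ofReal (levyDensity t v⁻¹) :=
        (lintegral_Ioi_zero_comp_inv fun s => ENNReal.ofReal (levyDensity t s)).symm
    _ = ∫⁻ v in Ioi (0 : ℝ), gammaPDF (1 / 2) (t ^ 2 / 4) v := by
        refine setLIntegral_congr_fun measurableSet_Ioi fun v hv => ?_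
        rw [← ENNReal.ofReal_mul (by positivity), inv_sq_mul_levyDensity_inv ht.le hv, gammaPDF]
    _ ≤ ∫⁻ v, gammaPDF (1 / 2) (t ^ 2 / 4) v := setLIntegral_le_lintegral _ _
    _ = 1 := lintegral_gammaPDF_eq_one (by positivity) (by positivity)

lemma hasDerivAt_integral_levyDensity_smul {E : Type*} [NormedAddCommGroup E] [NormedSpace ℝ E]
    {μ : Measure ℝ} {f : ℝ → E} {τ : ℝ} (hτ : 0 < τ) (hτt : 2 * τ < t)
    (hf : AEStronglyMeasurable f (μ.restrict (Ioi 0)))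
    (hint : IntegrableOn (fun s => levyDensity τ s • f s) (Ioi 0) μ) :
    HasDerivAt (fun u => ∫ s in Ioi 0, levyDensity u s • f s ∂μ)
      (∫ s in Ioi 0, levyDensityDeriv t s • f s ∂μ) t := by
  have hpos : ∀ᵐ s ∂μ.restrict (Ioi 0), 0 < s := ae_restrict_mem measurableSet_Ioi
  have hmeas (u : ℝ) :
      AEStronglyMeasurable (fun s => levyDensity u s • f s) (μ.restrict (Ioi 0)) :=
    (measurable_levyDensity u).aestronglyMeasurable.smul hf
  have hint_t : IntegrableOn (fun s => levyDensity t s • f s) (Ioi 0) μ := by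
    refine (hint.norm.const_mul (t / τ)).mono' (hmeas t) (hpos.mono fun s hs => ?_)
    rw [norm_smul, norm_smul, ← mul_assoc,
      norm_of_nonneg (levyDensity_nonneg (by linarith) hs.le),
      norm_of_nonneg (levyDensity_nonneg hτ.le hs.le)]
    gcongr
    exact levyDensity_le_div_mul hτ (by linarith) hs
  refine (hasDerivAt_integral_of_dominated_loc_of_deriv_le (Ioi_mem_nhds hτt)
    (.of_forall hmeas) hint_t ((measurable_levyDensityDeriv t).aestronglyMeasurable.smul hf)
    (bound := fun s => 6 / (2 * τ) * ‖levyDensity τ s • f s‖) (hpos.mono fun s hs u hu => ?_)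
    (hint.norm.const_mul _)
    (.of_forall fun s u _ => (hasDerivAt_levyDensity u s).smul_const (f s))).2
  rw [norm_smul, norm_smul, ← mul_assoc, norm_of_nonneg (levyDensity_nonneg hτ.le hs.le)]
  gcongr
  simpa using abs_levyDensityDeriv_le (by positivity : 0 < 2 * τ) (le_of_lt hu) hs

end LevyDensity

section Subordination

variable {Y : Type*} [MeasurableSpace Y] {ν : Measure Y} {W : ℝ → Y → ℝ≥0∞} {t : ℝ}

/-- The subordinated kernel `∫₀^∞ levyDensity t s * W s y ds` of a family of densities `W s`,
which plays the role of the Poisson kernel when `W` is a heat kernel. -/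
noncomputable def subordinate (W : ℝ → Y → ℝ≥0∞) (t : ℝ) (y : Y) : ℝ :=
  ∫ s in Ioi 0, levyDensity t s * (W s y).toReal

lemma measurable_levyDensity_mul (hW : Measurable (Function.uncurry W)) (t : ℝ) :
    Measurable fun p : Y × ℝ => ENNReal.ofReal (levyDensity t p.2) * W p.2 p.1 :=
  ((measurable_levyDensity t).comp measurable_snd).ennreal_ofReal.mul (hW.comp measurable_swap)

lemma lintegral_lintegral_levyDensity_mul_le_one [SFinite ν]
    (hW : Measurable (Function.uncurry W)) (hmass : ∀ s > 0, ∫⁻ y, W s y ∂ν ≤ 1) (ht : 0 < t) :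
    ∫⁻ y, (∫⁻ s in Ioi 0, ENNReal.ofReal (levyDensity t s) * W s y) ∂ν ≤ 1 := by
  rw [lintegral_lintegral_swap (measurable_levyDensity_mul hW t).aemeasurable]
  calc ∫⁻ s in Ioi 0, ∫⁻ y, ENNReal.ofReal (levyDensity t s) * W s y ∂ν
      ≤ ∫⁻ s in Ioi 0, ENNReal.ofReal (levyDensity t s) := by
        refine setLIntegral_mono' measurableSet_Ioi fun s hs => ?_
        rw [lintegral_const_mul' _ _ ENNReal.ofReal_ne_top]
        exact mul_le_of_le_one_right' (hmass s hs)
    _ ≤ 1 := lintegral_levyDensity_le_one ht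

lemma ae_integrableOn_levyDensity_mul [SFinite ν] (hW : Measurable (Function.uncurry W))
    (hmass : ∀ s > 0, ∫⁻ y, W s y ∂ν ≤ 1) (ht : 0 < t) :
    ∀ᵐ y ∂ν, IntegrableOn (fun s => levyDensity t s * (W s y).toReal) (Ioi 0) := by
  have hfin : ∀ᵐ y ∂ν, ∫⁻ s in Ioi 0, ENNReal.ofReal (levyDensity t s) * W s y < ∞ :=
    ae_lt_top
      ((measurable_levyDensity_mul hW t).lintegral_prod_right' (ν := volume.restrict (Ioi 0)))
      ((lintegral_lintegral_levyDensity_mul_le_one hW hmass ht).trans_lt ENNReal.one_lt_top).ne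
  filter_upwards [hfin] with y hy
  have hmeas : Measurable fun s => levyDensity t s * (W s y).toReal :=
    (measurable_levyDensity t).mul (hW.comp measurable_prodMk_right).ennreal_toReal
  refine ⟨hmeas.aestronglyMeasurable, ?_⟩
  refine (setLIntegral_mono' measurableSet_Ioi fun s hs => ?_).trans_lt hy
  rw [enorm_mul, Real.enorm_of_nonneg (levyDensity_nonneg ht.le (le_of_lt hs)),
    Real.enorm_of_nonneg ENNReal.toReal_nonneg]
  gcongr
  exact ENNReal.ofReal_toReal_le

lemma ae_hasDerivAt_subordinate [SFinite ν] (hW : Measurable (Function.uncurry W))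
    (hmass : ∀ s > 0, ∫⁻ y, W s y ∂ν ≤ 1) (ht : 0 < t) :
    ∀ᵐ y ∂ν, HasDerivAt (fun u => subordinate W u y)
      (∫ s in Ioi 0, levyDensityDeriv t s * (W s y).toReal) t := by
  filter_upwards [ae_integrableOn_levyDensity_mul hW hmass (by positivity : 0 < t / 4)] with y hy
  exact hasDerivAt_integral_levyDensity_smul (by positivity) (by linarith)
    (hW.comp measurable_prodMk_right).ennreal_toReal.aestronglyMeasurable hy

lemma aestronglyMeasurable_deriv_subordinate [SFinite ν] (hW : Measurable (Function.uncurry W))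
    (hmass : ∀ s > 0, ∫⁻ y, W s y ∂ν ≤ 1) (ht : 0 < t) :
    AEStronglyMeasurable (fun y => deriv (fun u => subordinate W u y) t) ν := by
  have hmeas : Measurable fun p : Y × ℝ => levyDensityDeriv t p.2 * (W p.2 p.1).toReal :=
    ((measurable_levyDensityDeriv t).comp measurable_snd).mul
      (hW.comp measurable_swap).ennreal_toReal
  refine (hmeas.stronglyMeasurable.integral_prod_right'
    (ν := volume.restrict (Ioi 0))).aestronglyMeasurable.congr ?_
  filter_upwards [ae_hasDerivAt_subordinate hW hmass ht] with y hy using hy.deriv.symm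

lemma lintegral_enorm_deriv_subordinate_le [SFinite ν] (hW : Measurable (Function.uncurry W))
    (hmass : ∀ s > 0, ∫⁻ y, W s y ∂ν ≤ 1) (ht : 0 < t) :
    ∫⁻ y, ‖deriv (fun u => subordinate W u y) t‖ₑ ∂ν ≤ ENNReal.ofReal (6 / t) := by
  have hpointwise (y : Y) (s : ℝ) (hs : s ∈ Ioi 0) : ‖levyDensityDeriv t s * (W s y).toReal‖ₑ ≤
      ENNReal.ofReal (6 / t) * (ENNReal.ofReal (levyDensity (t / 2) s) * W s y) := by
    rw [enorm_mul, ← mul_assoc, ← ENNReal.ofReal_mul (by positivity),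
      Real.enorm_of_nonneg ENNReal.toReal_nonneg, Real.enorm_eq_ofReal_abs]
    gcongr
    · exact abs_levyDensityDeriv_le ht le_rfl hs
    · exact ENNReal.ofReal_toReal_le
  calc ∫⁻ y, ‖deriv (fun u => subordinate W u y) t‖ₑ ∂ν
      = ∫⁻ y, ‖(∫ s in Ioi 0, levyDensityDeriv t s * (W s y).toReal)‖ₑ ∂ν := by
        refine lintegral_congr_ae ?_
        filter_upwards [ae_hasDerivAt_subordinate hW hmass ht] with y hy
        rw [hy.deriv]
    _ ≤ ∫⁻ y, (∫⁻ s in Ioi 0, ‖levyDensityDeriv t s * (W s y).toReal‖ₑ) ∂ν :=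
        lintegral_mono fun y => enorm_integral_le_lintegral_enorm _
    _ ≤ ∫⁻ y, (∫⁻ s in Ioi 0,
          ENNReal.ofReal (6 / t) * (ENNReal.ofReal (levyDensity (t / 2) s) * W s y)) ∂ν :=
        lintegral_mono fun y => setLIntegral_mono' measurableSet_Ioi (hpointwise y)
    _ = ENNReal.ofReal (6 / t) *
          ∫⁻ y, (∫⁻ s in Ioi 0, ENNReal.ofReal (levyDensity (t / 2) s) * W s y) ∂ν := by
        simp_rw [lintegral_const_mul' _ _ ENNReal.ofReal_ne_top]
    _ ≤ ENNReal.ofReal (6 / t) :=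
        mul_le_of_le_one_right'
          (lintegral_lintegral_levyDensity_mul_le_one hW hmass (by positivity))

lemma integrable_deriv_subordinate [SFinite ν] (hW : Measurable (Function.uncurry W))
    (hmass : ∀ s > 0, ∫⁻ y, W s y ∂ν ≤ 1) (ht : 0 < t) :
    Integrable (fun y => deriv (fun u => subordinate W u y) t) ν :=
  ⟨aestronglyMeasurable_deriv_subordinate hW hmass ht,
    (lintegral_enorm_deriv_subordinate_le hW hmass ht).trans_lt ENNReal.ofReal_lt_top⟩

lemma integral_abs_deriv_subordinate_le [SFinite ν] (hW : Measurable (Function.uncurry W))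
    (hmass : ∀ s > 0, ∫⁻ y, W s y ∂ν ≤ 1) (ht : 0 < t) :
    ∫ y, |deriv (fun u => subordinate W u y) t| ∂ν ≤ 6 / t := by
  simp_rw [← norm_eq_abs]
  rw [integral_norm_eq_lintegral_enorm (aestronglyMeasurable_deriv_subordinate hW hmass ht)]
  exact ENNReal.toReal_le_of_le_ofReal (by positivity)
    (lintegral_enorm_deriv_subordinate_le hW hmass ht)

end Subordination

section NoncentralGamma

/-- The density at `y` of the noncentral gamma law with shape `k`, rate `ρ` and noncentrality `l`:
the gamma densities of shape `m + k`, mixed over a Poisson variable `m` of mean `l`. -/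
noncomputable def noncentralGammaPDF (k ρ l y : ℝ) : ℝ≥0∞ :=
  ∑' m : ℕ, ENNReal.ofReal (exp (-l) * l ^ m / m !) * gammaPDF (m + k) ρ y

lemma measurable_noncentralGammaPDF (k : ℝ) :
    Measurable fun p : ℝ × ℝ × ℝ => noncentralGammaPDF k p.1 p.2.1 p.2.2 := by
  unfold noncentralGammaPDF gammaPDF gammaPDFReal
  refine Measurable.tsum fun m => Measurable.mul (by fun_prop)
    (Measurable.ite ?_ (by fun_prop) measurable_const).ennreal_ofReal
  exact measurableSet_le measurable_const (by fun_prop)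

variable {k ρ l y : ℝ}

lemma lintegral_noncentralGammaPDF (hk : 0 < k) (hρ : 0 < ρ) (hl : 0 ≤ l) :
    ∫⁻ y, noncentralGammaPDF k ρ l y = 1 := by
  have hpoisson : HasSum (fun m : ℕ => exp (-l) * l ^ m / m !) 1 :=
    hasSum_one_poissonMeasure ⟨l, hl⟩
  have hgamma (m : ℕ) : ∫⁻ y, gammaPDF (m + k) ρ y = 1 :=
    lintegral_gammaPDF_eq_one (by positivity) hρ
  have hmeas (m : ℕ) : Measurable (gammaPDF (m + k) ρ) :=
    (measurable_gammaPDFReal _ _).ennreal_ofReal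
  unfold noncentralGammaPDF
  rw [lintegral_tsum fun m => ((hmeas m).const_mul _).aemeasurable]
  simp_rw [lintegral_const_mul _ (hmeas _), hgamma, mul_one]
  rw [← ENNReal.ofReal_tsum_of_nonneg (fun m => by positivity) hpoisson.summable,
    hpoisson.tsum_eq, ENNReal.ofReal_one]

lemma div_rpow_mul_sqrt_mul_rpow {z : ℝ} (hl : 0 < l) (hz : 0 < z) (ν : ℝ) (m : ℕ) :
    (z / l) ^ (ν / 2) * √(l * z) ^ (2 * (m : ℝ) + ν) = l ^ m * z ^ (m + ν) := by
  obtain ⟨l, rfl⟩ : ∃ a, l = exp a := ⟨log l, (exp_log hl).symm⟩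
  obtain ⟨z, rfl⟩ : ∃ a, z = exp a := ⟨log z, (exp_log hz).symm⟩
  simp only [← exp_add, ← exp_sub, ← exp_mul, ← exp_half, ← exp_nat_mul]
  ring_nf

lemma toReal_noncentralGammaPDF {ν : ℝ} (hν : -1 < ν) (hρ : 0 < ρ) (hl : 0 < l) (hy : 0 < y) :
    (noncentralGammaPDF (ν + 1) ρ l y).toReal =
      ρ * (ρ * y / l) ^ (ν / 2) * exp (-(l + ρ * y)) * besselI ν (2 * √(l * (ρ * y))) := by
  have hshape (m : ℕ) : 0 < (m : ℝ) + (ν + 1) := by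
    have := m.cast_nonneg (α := ℝ)
    linarith
  have hfin (m : ℕ) : ENNReal.ofReal (exp (-l) * l ^ m / m !) * gammaPDF (m + (ν + 1)) ρ y ≠ ∞ :=
    ENNReal.mul_ne_top ENNReal.ofReal_ne_top ENNReal.ofReal_ne_top
  rw [noncentralGammaPDF, besselI, ENNReal.tsum_toReal_eq hfin, ← tsum_mul_left]
  refine tsum_congr fun m => ?_
  rw [ENNReal.toReal_mul, ENNReal.toReal_ofReal (by positivity), gammaPDF,
    ENNReal.toReal_ofReal (gammaPDFReal_nonneg (hshape m) hρ y), gammaPDFReal, if_pos hy.le,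
    mul_div_cancel_left₀ _ two_ne_zero, add_assoc, neg_add, exp_add]
  have hρy : ρ ^ (m + (ν + 1)) * y ^ (m + (ν + 1) - 1) = ρ * (ρ * y) ^ (m + ν) := by
    rw [← add_assoc, rpow_add_one hρ.ne', add_sub_cancel_right, mul_rpow hρ.le hy.le]
    ring
  calc exp (-l) * l ^ m / m ! *
        (ρ ^ (m + (ν + 1)) / Gamma (m + (ν + 1)) * y ^ (m + (ν + 1) - 1) * exp (-(ρ * y)))
      = exp (-l) * exp (-(ρ * y)) * l ^ m * (ρ ^ (m + (ν + 1)) * y ^ (m + (ν + 1) - 1)) /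
          (m ! * Gamma (m + (ν + 1))) := by ring
    _ = ρ * (exp (-l) * exp (-(ρ * y))) * (l ^ m * (ρ * y) ^ (m + ν)) /
          (m ! * Gamma (m + (ν + 1))) := by
        rw [hρy]
        ring
    _ = _ := by
        rw [← div_rpow_mul_sqrt_mul_rpow hl (mul_pos hρ hy)]
        ring

end NoncentralGamma

section Laguerre

/-- The one-dimensional Laguerre heat kernel at time `s`, as a density in `y` for Lebesgue measure,
in the variable `r = exp (-s)`. The Hille–Hardy formula identifies it with a noncentral gamma
density. -/
noncomputable def hilleHardyKernel (a r x y : ℝ) : ℝ≥0∞ :=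
  noncentralGammaPDF (a + 1) (1 - r)⁻¹ (r * x / (1 - r)) y

/-- The Laguerre heat kernel at time `s` in several variables, with the base point `x` first so that
`laguerreHeatKernel α x` is a family of densities to which `subordinate` applies. -/
noncomputable def laguerreHeatKernel {ι : Type*} [Fintype ι] (α x : ι → ℝ) (s : ℝ) (y : ι → ℝ) :
    ℝ≥0∞ :=
  ∏ j, hilleHardyKernel (α j) (exp (-s)) (x j) (y j)

lemma measurable_hilleHardyKernel (a x : ℝ) :
    Measurable fun p : ℝ × ℝ => hilleHardyKernel a p.1 x p.2 :=
  (measurable_noncentralGammaPDF (a + 1)).comp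
    (f := fun p : ℝ × ℝ => ((1 - p.1)⁻¹, p.1 * x / (1 - p.1), p.2)) (by fun_prop)

lemma lintegral_hilleHardyKernel {a r x : ℝ} (ha : -1 < a) (hr : r ∈ Ioo 0 1) (hx : 0 ≤ x) :
    ∫⁻ y, hilleHardyKernel a r x y = 1 := by
  have hq : 0 < 1 - r := sub_pos.2 hr.2
  have hr0 : 0 < r := hr.1
  exact lintegral_noncentralGammaPDF (by linarith) (by positivity) (by positivity)

lemma toReal_hilleHardyKernel {a r x y : ℝ} (ha : -1 < a) (hr : r ∈ Ioo 0 1) (hx : 0 < x)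
    (hy : 0 < y) :
    (hilleHardyKernel a r x y).toReal =
      (1 - r)⁻¹ * ((y / x) ^ (a / 2) * exp (-((r * x + y) / (1 - r)) - a * log r / 2) *
        besselI a (2 * √(r * x * y) / (1 - r))) := by
  have hq : 0 < 1 - r := sub_pos.2 hr.2
  have hr0 : 0 < r := hr.1
  have hratio : ((1 - r)⁻¹ * y / (r * x / (1 - r))) ^ (a / 2) =
      (y / x) ^ (a / 2) * exp (-(a * log r / 2)) := by
    rw [show (1 - r)⁻¹ * y / (r * x / (1 - r)) = y / x / r by field_simp,
      div_rpow (by positivity) hr0.le, rpow_def_of_pos hr0, div_eq_mul_inv, ← exp_neg]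
    ring_nf
  have harg : 2 * √(r * x / (1 - r) * ((1 - r)⁻¹ * y)) = 2 * √(r * x * y) / (1 - r) := by
    rw [show r * x / (1 - r) * ((1 - r)⁻¹ * y) = r * x * y / (1 - r) ^ 2 by field_simp,
      sqrt_div' _ (sq_nonneg _), sqrt_sq hq.le, mul_div_assoc]
  have hexp : exp (-((r * x + y) / (1 - r)) - a * log r / 2) =
      exp (-(r * x / (1 - r) + (1 - r)⁻¹ * y)) * exp (-(a * log r / 2)) := by
    rw [← exp_add]
    ring_nf
  rw [hilleHardyKernel, toReal_noncentralGammaPDF ha (by positivity) (by positivity) hy, hratio,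
    harg, hexp]
  ring

lemma measurable_laguerreHeatKernel {ι : Type*} [Fintype ι] (α x : ι → ℝ) :
    Measurable (Function.uncurry (laguerreHeatKernel α x)) :=
  Finset.univ.measurable_fun_prod fun j _ => (measurable_hilleHardyKernel (α j) (x j)).comp
    (f := fun p : ℝ × (ι → ℝ) => (exp (-p.1), p.2 j)) (by fun_prop)

lemma exp_neg_mem_Ioo {s : ℝ} (hs : 0 < s) : exp (-s) ∈ Ioo 0 1 :=
  ⟨exp_pos _, exp_lt_one_iff.2 (neg_lt_zero.2 hs)⟩

lemma lintegral_laguerreHeatKernel {ι : Type*} [Fintype ι] {α x : ι → ℝ} {s : ℝ}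
    (hα : ∀ j, -1 < α j) (hx : ∀ j, 0 ≤ x j) (hs : 0 < s) :
    ∫⁻ y, laguerreHeatKernel α x s y = 1 := by
  have hmeas (j : ι) : Measurable (hilleHardyKernel (α j) (exp (-s)) (x j)) :=
    (measurable_hilleHardyKernel (α j) (x j)).comp (f := Prod.mk (exp (-s))) measurable_prodMk_left
  unfold laguerreHeatKernel
  rw [volume_pi, lintegral_fintype_prod_eq_prod hmeas]
  exact Finset.prod_eq_one fun j _ =>
    lintegral_hilleHardyKernel (hα j) (exp_neg_mem_Ioo hs) (hx j)

variable {d : ℕ} {α x y : Fin d → ℝ}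

lemma plKernel_eq_subordinate (hα : ∀ j, -1 < α j) (hx : x ∈ posOrthant d) (hy : y ∈ posOrthant d)
    (t : ℝ) : plKernel d α t x y = subordinate (laguerreHeatKernel α x) t y := by
  have hsubst := integral_Ioo_zero_one_inv_smul fun r =>
    t * exp (t ^ 2 / (4 * log r)) / ((1 - r) ^ d * (-log r) ^ (3 / 2 : ℝ)) *
      ∏ j, (y j / x j) ^ (α j / 2) * exp (-((r * x j + y j) / (1 - r)) - α j * log r / 2) *
        besselI (α j) (2 * √(r * x j * y j) / (1 - r))
  simp only [smul_eq_mul, inv_mul_eq_div] at hsubst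
  rw [plKernel, hsubst, subordinate, ← integral_const_mul]
  refine setIntegral_congr_fun measurableSet_Ioi fun s hs => ?_
  have hfactor (j : Fin d) := toReal_hilleHardyKernel (hα j) (exp_neg_mem_Ioo hs)
    (hx j (mem_univ j)) (hy j (mem_univ j))
  simp only [laguerreHeatKernel, ENNReal.toReal_prod, hfactor, Finset.prod_mul_distrib,
    Finset.prod_const, Finset.card_fin, inv_pow, levyDensity, log_exp, neg_neg]
  rw [mul_neg, div_neg]
  ring

theorem laguerre_poisson_kernel_deriv_L1_small_region_general
    (hα : ∀ j, -1 < α j) (hx : x ∈ posOrthant d) {t : ℝ} (ht : 0 < t) :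
    IntegrableOn (fun y => deriv (fun u => plKernel d α u x y) t) (posOrthant d) ∧
      ∫ y in posOrthant d, |deriv (fun u => plKernel d α u x y) t| ≤ 6 / t := by
  have hmass : ∀ s > 0, ∫⁻ y in posOrthant d, laguerreHeatKernel α x s y ≤ 1 := fun s hs =>
    (setLIntegral_le_lintegral _ _).trans_eq
      (lintegral_laguerreHeatKernel hα (fun j => le_of_lt (hx j (mem_univ j))) hs)
  have hW := measurable_laguerreHeatKernel α x
  have hderiv : EqOn (fun y => deriv (fun u => plKernel d α u x y) t)
      (fun y => deriv (fun u => subordinate (laguerreHeatKernel α x) u y) t) (posOrthant d) :=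
    fun y hy => by simp only [plKernel_eq_subordinate hα hx hy]
  have hmeas : MeasurableSet (posOrthant d) := .univ_pi fun _ => measurableSet_Ioi
  rw [integrableOn_congr_fun hderiv hmeas,
    setIntegral_congr_fun hmeas fun y hy => congrArg abs (hderiv hy)]
  exact ⟨integrable_deriv_subordinate hW hmass ht, integral_abs_deriv_subordinate_le hW hmass ht⟩

end Laguerre

theorem laguerre_poisson_kernel_deriv_L1_small_region
    (d : ℕ) (hd : 1 ≤ d) (α : Fin d → ℝ) (hα : ∀ j, -1 < α j) :
    ∃ C > 0, ∀ t > (0 : ℝ), ∀ x ∈ posOrthant d,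
      (∫ y in {y : Fin d → ℝ | (∀ j, 0 < y j) ∧
          ∀ j, Real.sqrt (Real.exp (-t) * x j * y j) ≤ 1 - Real.exp (-t)},
        |deriv (fun u => plKernel d α u x y) t|) ≤ C / t := by
  refine ⟨6, by norm_num, fun t ht x hx => ?_⟩
  obtain ⟨hint, hle⟩ := laguerre_poisson_kernel_deriv_L1_small_region_general hα hx ht
  exact (setIntegral_mono_set hint.abs (.of_forall fun _ => abs_nonneg _)
    (LE.le.eventuallyLE fun y hy j _ => hy.1 j)).trans hle
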